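/- Let s_1, s_2, s_3 be positive integers and let θ_{s_1,s_2,s_3} be the theta graph. Then for every natural number x, the following identity holds in the integers: (x+1)·π(θ_{s_1,s_2,s_3}, x+1) = x·( x^(s_1+s_2+s_3−1) + (−1)^(s_1+s_2)·x^(s_3) + (−1)^(s_1+s_3)·x^(s_2) + (−1)^(s_2+s_3)·x^(s_1) + (−1)^(s_1+s_2+s_3)·(x−1) ). -/

import Mathlib

/-!
The theta graph is three internally disjoint paths glued at their ends, so once the colours
`a`, `b` of `u`, `v` are fixed, the colourings of the three paths are independent
(`theta_proper_iff`, `chromPoly_theta`). The number of colourings of a path with `n` internal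
vertices and end colours `a`, `b` is the number of walks of length `n + 1` from `a` to `b` in the
complete graph on the `x + 1` colours. Its adjacency matrix is `J - I`, with `J` all ones, whence
`(x + 1) * pathCount = x ^ (n + 1) - (-1) ^ (n + 1)` off the diagonal and
`x ^ (n + 1) + (-1) ^ (n + 1) * x` on it (`pathCount_formula`). Among the pairs `(a, b)` there are
`x + 1` with `a = b` and `(x + 1) * x` with `a ≠ b`; summing the products of the three path counts
over them gives the identity multiplied by `(x + 1) ^ 2`, which is then cancelled.
-/

open SimpleGraph Finset

/-- `chromPoly G x` is the number of proper `x`-colorings of the graph `G`,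
i.e. the value `π(G,x)` of the chromatic polynomial at `x`. -/
noncomputable def chromPoly {V : Type} (G : SimpleGraph V) (x : ℕ) : ℕ :=
  Nat.card {f : V → Fin x // ∀ ⦃u v : V⦄, G.Adj u v → f u ≠ f v}

/-- Relation generating the theta graph `θ_{s₁,s₂,s₃}`: vertex `Sum.inl 0` is `u`,
vertex `Sum.inl 1` is `v`, and the three `Fin (sᵢ - 1)` blocks are the internal
vertices of the three internally disjoint `u,v`-paths with `s₁`, `s₂`, `s₃` edges.
When `sᵢ = 1` the corresponding path is the single edge `uv` (coinciding edges
being identified, so the graph is simple). -/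
def thetaRel (s₁ s₂ s₃ : ℕ) :
    (Fin 2 ⊕ (Fin (s₁-1) ⊕ Fin (s₂-1) ⊕ Fin (s₃-1))) →
    (Fin 2 ⊕ (Fin (s₁-1) ⊕ Fin (s₂-1) ⊕ Fin (s₃-1))) → Prop
  | Sum.inl a, Sum.inl b => a = 0 ∧ b = 1 ∧ (s₁ = 1 ∨ s₂ = 1 ∨ s₃ = 1)
  | Sum.inl a, Sum.inr (Sum.inl i) => (a = 0 ∧ (i:ℕ) = 0) ∨ (a = 1 ∧ (i:ℕ) = s₁ - 2)
  | Sum.inl a, Sum.inr (Sum.inr (Sum.inl i)) => (a = 0 ∧ (i:ℕ) = 0) ∨ (a = 1 ∧ (i:ℕ) = s₂ - 2)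
  | Sum.inl a, Sum.inr (Sum.inr (Sum.inr i)) => (a = 0 ∧ (i:ℕ) = 0) ∨ (a = 1 ∧ (i:ℕ) = s₃ - 2)
  | Sum.inr (Sum.inl i), Sum.inr (Sum.inl j) => (j:ℕ) = (i:ℕ) + 1
  | Sum.inr (Sum.inr (Sum.inl i)), Sum.inr (Sum.inr (Sum.inl j)) => (j:ℕ) = (i:ℕ) + 1
  | Sum.inr (Sum.inr (Sum.inr i)), Sum.inr (Sum.inr (Sum.inr j)) => (j:ℕ) = (i:ℕ) + 1
  | _, _ => False

/-- The theta graph `θ_{s₁,s₂,s₃}`: two vertices joined by three internally disjoint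
paths with `s₁`, `s₂`, `s₃` edges (of order `s₁+s₂+s₃-1` when all `sᵢ ≥ 1`). -/
def thetaGraph (s₁ s₂ s₃ : ℕ) :
    SimpleGraph (Fin 2 ⊕ (Fin (s₁-1) ⊕ Fin (s₂-1) ⊕ Fin (s₃-1))) :=
  SimpleGraph.fromRel (thetaRel s₁ s₂ s₃)

/-- `f` properly colours the `n` internal vertices of a path whose ends have colours `a` and `b`.
For `n = 0` the path is a single edge, so the condition is `a ≠ b`. -/
def PathProper {C : Type} (n : ℕ) (a b : C) (f : Fin n → C) : Prop :=
  (n = 0 → a ≠ b) ∧ (∀ i : Fin n, (i : ℕ) = 0 → a ≠ f i) ∧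
    (∀ i : Fin n, (i : ℕ) = n - 1 → b ≠ f i) ∧
    ∀ i j : Fin n, (j : ℕ) = (i : ℕ) + 1 → f i ≠ f j

/-- The number of proper colourings, with colours in `C`, of the internal vertices of a path with
`n` internal vertices and ends coloured `a` and `b`. -/
noncomputable def pathCount (C : Type) (n : ℕ) (a b : C) : ℕ :=
  Nat.card {f : Fin n → C // PathProper n a b f}

lemma pathProper_cons {C : Type} (n : ℕ) (a b c : C) (g : Fin n → C) :
    PathProper (n + 1) a b (Fin.cons c g : Fin (n + 1) → C) ↔ a ≠ c ∧ PathProper n c b g := by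
  unfold PathProper
  simp only [Fin.forall_fin_succ, Fin.cons_zero, Fin.cons_succ, Fin.val_zero, Fin.val_succ]
  constructor
  · rintro ⟨-, ⟨h1, -⟩, ⟨h2, h3⟩, ⟨-, h4⟩, h5⟩
    refine ⟨h1 trivial, fun hn => (h2 (by omega)).symm, fun i hi => h4 i (by omega),
      fun i hi => h3 i (by omega), fun i j hij => (h5 i).2 j (by omega)⟩
  · rintro ⟨h1, h2, h3, h4, h5⟩
    refine ⟨by omega, ⟨fun _ => h1, by omega⟩, ⟨fun h => (h2 (by omega)).symm,
      fun i hi => h4 i (by omega)⟩, ⟨by omega, fun i hi => h3 i (by omega)⟩,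
      fun i => ⟨by omega, fun j hij => h5 i j (by omega)⟩⟩

lemma pathCount_zero {C : Type} [DecidableEq C] (a b : C) :
    pathCount C 0 a b = if a = b then 0 else 1 := by
  unfold pathCount
  split_ifs with h
  · have : IsEmpty {f : Fin 0 → C // PathProper 0 a b f} := ⟨fun f => f.2.1 rfl h⟩
    simp
  · have hp : ∀ f : Fin 0 → C, PathProper 0 a b f := fun f =>
      ⟨fun _ => h, fun i => i.elim0, fun i => i.elim0, fun i => i.elim0⟩
    rw [Nat.card_congr (Equiv.subtypeUnivEquiv hp)]
    simp

/-- Splitting off the first internal vertex of the path, coloured `c ≠ a`. -/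
lemma pathCount_succ {C : Type} [Fintype C] [DecidableEq C] (n : ℕ) (a b : C) :
    pathCount C (n + 1) a b = ∑ c, if a = c then 0 else pathCount C n c b := by
  let e : {f : Fin (n + 1) → C // PathProper (n + 1) a b f} ≃
      Σ c : C, {g : Fin n → C // a ≠ c ∧ PathProper n c b g} :=
    { toFun := fun f => ⟨f.1 0, Fin.tail f.1, by
        have := f.2
        rwa [← Fin.cons_self_tail f.1, pathProper_cons] at this⟩
      invFun := fun p => ⟨Fin.cons p.1 p.2.1, (pathProper_cons _ _ _ _ _).2 p.2.2⟩
      left_inv := fun f => Subtype.ext (Fin.cons_self_tail f.1)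
      right_inv := fun p => rfl }
  unfold pathCount
  rw [Nat.card_congr e, Nat.card_sigma]
  refine Finset.sum_congr rfl fun c _ => ?_
  split_ifs with h <;> simp [h]

/-- The entries of `(J - I) ^ (n + 1)`, cleared of denominators. -/
lemma pathCount_formula (x n : ℕ) (a b : Fin (x + 1)) :
    ((x : ℤ) + 1) * (pathCount (Fin (x + 1)) n a b : ℤ) =
      x ^ (n + 1) - (-1) ^ (n + 1) + if a = b then ((x : ℤ) + 1) * (-1) ^ (n + 1) else 0 := by
  induction n generalizing a with
  | zero =>
    rw [pathCount_zero]
    split_ifs <;> push_cast <;> ring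
  | succ n ih =>
    -- The sum over `c ≠ a` is the full sum minus its term at `c = a`.
    have key : ∀ F : Fin (x + 1) → ℤ, (∑ c, if a = c then 0 else F c) = (∑ c, F c) - F a := by
      intro F
      rw [← Finset.add_sum_erase _ F (Finset.mem_univ a),
        ← Finset.add_sum_erase _ _ (Finset.mem_univ a), if_pos rfl, zero_add, add_sub_cancel_left]
      refine Finset.sum_congr rfl fun c hc => ?_
      rw [if_neg (Finset.ne_of_mem_erase hc).symm]
    rw [pathCount_succ]
    push_cast
    rw [key, mul_sub, Finset.mul_sum]
    simp only [ih]
    rw [Finset.sum_add_distrib]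
    simp only [Finset.sum_const, Finset.card_univ, Fintype.card_fin, nsmul_eq_mul,
      Finset.sum_ite_eq', Finset.mem_univ, if_true]
    split_ifs <;> push_cast <;> ring

lemma theta_proper_iff {C : Type} (n₁ n₂ n₃ : ℕ) (f : Fin 2 ⊕ (Fin n₁ ⊕ Fin n₂ ⊕ Fin n₃) → C) :
    (∀ ⦃u v⦄, (thetaGraph (n₁ + 1) (n₂ + 1) (n₃ + 1)).Adj u v → f u ≠ f v) ↔
      PathProper n₁ (f (.inl 0)) (f (.inl 1)) (fun i => f (.inr (.inl i))) ∧
      PathProper n₂ (f (.inl 0)) (f (.inl 1)) (fun i => f (.inr (.inr (.inl i)))) ∧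
      PathProper n₃ (f (.inl 0)) (f (.inl 1)) (fun i => f (.inr (.inr (.inr i)))) := by
  -- Adjacency is the symmetrization of `thetaRel`, which is irreflexive.
  have irr : ∀ u v, thetaRel (n₁ + 1) (n₂ + 1) (n₃ + 1) u v → u ≠ v := by
    rintro (a | i | i | i) v h rfl <;> simp [thetaRel] at h
    omega
  have red : (∀ ⦃u v⦄, (thetaGraph (n₁ + 1) (n₂ + 1) (n₃ + 1)).Adj u v → f u ≠ f v) ↔
      ∀ u v, thetaRel (n₁ + 1) (n₂ + 1) (n₃ + 1) u v → f u ≠ f v := by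
    constructor
    · exact fun h u v huv => h ((SimpleGraph.fromRel_adj _ _ _).2 ⟨irr u v huv, Or.inl huv⟩)
    · intro h u v huv
      rcases ((SimpleGraph.fromRel_adj _ _ _).1 huv).2 with h' | h'
      · exact h u v h'
      · exact (h v u h').symm
  rw [red]
  constructor
  · intro h
    refine ⟨⟨fun hn => h (.inl 0) (.inl 1) ?_, fun i hi => h (.inl 0) (.inr (.inl i)) ?_,
        fun i hi => h (.inl 1) (.inr (.inl i)) ?_,
        fun i j hij => h (.inr (.inl i)) (.inr (.inl j)) hij⟩,
      ⟨fun hn => h (.inl 0) (.inl 1) ?_, fun i hi => h (.inl 0) (.inr (.inr (.inl i))) ?_,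
        fun i hi => h (.inl 1) (.inr (.inr (.inl i))) ?_,
        fun i j hij => h (.inr (.inr (.inl i))) (.inr (.inr (.inl j))) hij⟩,
      ⟨fun hn => h (.inl 0) (.inl 1) ?_, fun i hi => h (.inl 0) (.inr (.inr (.inr i))) ?_,
        fun i hi => h (.inl 1) (.inr (.inr (.inr i))) ?_,
        fun i j hij => h (.inr (.inr (.inr i))) (.inr (.inr (.inr j))) hij⟩⟩ <;>
    simp [thetaRel, *]
  · rintro ⟨⟨p1, p2, p3, p4⟩, ⟨q1, q2, q3, q4⟩, ⟨r1, r2, r3, r4⟩⟩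
    rintro (a | i | i | i) (b | j | j | j) h <;> simp only [thetaRel] at h
    · obtain ⟨rfl, rfl, h | h | h⟩ := h
      · exact p1 (by omega)
      · exact q1 (by omega)
      · exact r1 (by omega)
    · obtain ⟨rfl, h⟩ | ⟨rfl, h⟩ := h
      · exact p2 _ h
      · exact p3 _ (by omega)
    · obtain ⟨rfl, h⟩ | ⟨rfl, h⟩ := h
      · exact q2 _ h
      · exact q3 _ (by omega)
    · obtain ⟨rfl, h⟩ | ⟨rfl, h⟩ := h
      · exact r2 _ h
      · exact r3 _ (by omega)
    · exact p4 _ _ h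
    · exact q4 _ _ h
    · exact r4 _ _ h

lemma chromPoly_theta (n₁ n₂ n₃ k : ℕ) :
    chromPoly (thetaGraph (n₁ + 1) (n₂ + 1) (n₃ + 1)) k =
      ∑ p : Fin k × Fin k, pathCount (Fin k) n₁ p.1 p.2 *
        (pathCount (Fin k) n₂ p.1 p.2 * pathCount (Fin k) n₃ p.1 p.2) := by
  let e : {f : Fin 2 ⊕ (Fin n₁ ⊕ Fin n₂ ⊕ Fin n₃) → Fin k //
        ∀ ⦃u v⦄, (thetaGraph (n₁ + 1) (n₂ + 1) (n₃ + 1)).Adj u v → f u ≠ f v} ≃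
      Σ p : Fin k × Fin k, {g : Fin n₁ → Fin k // PathProper n₁ p.1 p.2 g} ×
        {g : Fin n₂ → Fin k // PathProper n₂ p.1 p.2 g} ×
        {g : Fin n₃ → Fin k // PathProper n₃ p.1 p.2 g} :=
    { toFun := fun f => ⟨(f.1 (.inl 0), f.1 (.inl 1)),
        ⟨_, ((theta_proper_iff _ _ _ _).1 f.2).1⟩,
        ⟨_, ((theta_proper_iff _ _ _ _).1 f.2).2.1⟩,
        ⟨_, ((theta_proper_iff _ _ _ _).1 f.2).2.2⟩⟩
      invFun := fun p => ⟨Sum.elim ![p.1.1, p.1.2]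
          (Sum.elim p.2.1.1 (Sum.elim p.2.2.1.1 p.2.2.2.1)),
        (theta_proper_iff _ _ _ _).2 ⟨p.2.1.2, p.2.2.1.2, p.2.2.2.2⟩⟩
      left_inv := fun f => by
        apply Subtype.ext
        funext v
        rcases v with a | i | i | i
        · fin_cases a <;> rfl
        all_goals rfl
      right_inv := fun p => rfl }
  have h := Nat.card_congr e
  rw [Nat.card_sigma] at h
  simp only [Nat.card_prod] at h
  exact h

/-- **Lemma 4.2.** For positive integers `s₁, s₂, s₃` and every natural number `x`,
`(x+1) · π(θ_{s₁,s₂,s₃}, x+1) = x · (x^(s₁+s₂+s₃-1) + (-1)^(s₁+s₂)·x^(s₃)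
  + (-1)^(s₁+s₃)·x^(s₂) + (-1)^(s₂+s₃)·x^(s₁) + (-1)^(s₁+s₂+s₃)·(x-1))`
as an identity in the integers. -/
theorem statement_5 (s₁ s₂ s₃ : ℕ) (h₁ : 1 ≤ s₁) (h₂ : 1 ≤ s₂) (h₃ : 1 ≤ s₃) (x : ℕ) :
    ((x : ℤ) + 1) * (chromPoly (thetaGraph s₁ s₂ s₃) (x + 1) : ℤ) =
      (x : ℤ) * ((x : ℤ) ^ (s₁ + s₂ + s₃ - 1) + (-1) ^ (s₁ + s₂) * (x : ℤ) ^ s₃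
        + (-1) ^ (s₁ + s₃) * (x : ℤ) ^ s₂ + (-1) ^ (s₂ + s₃) * (x : ℤ) ^ s₁
        + (-1) ^ (s₁ + s₂ + s₃) * ((x : ℤ) - 1)) := by
  obtain ⟨n₁, rfl⟩ := Nat.exists_eq_add_of_le' h₁
  obtain ⟨n₂, rfl⟩ := Nat.exists_eq_add_of_le' h₂
  obtain ⟨n₃, rfl⟩ := Nat.exists_eq_add_of_le' h₃
  have hx : ((x : ℤ) + 1) ^ 2 ≠ 0 := by positivity
  apply mul_left_cancel₀ hx
  have hexp : n₁ + 1 + (n₂ + 1) + (n₃ + 1) - 1 = n₁ + n₂ + n₃ + 2 := by omega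
  rw [hexp, chromPoly_theta]
  push_cast
  rw [← mul_assoc, ← pow_succ, Finset.mul_sum]
  -- Distribute one factor `x + 1` to each of the three path counts.
  have hterm : ∀ p : Fin (x + 1) × Fin (x + 1),
      ((x : ℤ) + 1) ^ (2 + 1) * ((pathCount (Fin (x + 1)) n₁ p.1 p.2 : ℤ) *
        ((pathCount (Fin (x + 1)) n₂ p.1 p.2 : ℤ) * (pathCount (Fin (x + 1)) n₃ p.1 p.2 : ℤ))) =
      ((x : ℤ) ^ (n₁ + 1) - (-1) ^ (n₁ + 1)) * ((x : ℤ) ^ (n₂ + 1) - (-1) ^ (n₂ + 1)) *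
        ((x : ℤ) ^ (n₃ + 1) - (-1) ^ (n₃ + 1)) +
      if p.1 = p.2 then
        ((x : ℤ) ^ (n₁ + 1) + (-1) ^ (n₁ + 1) * x) * ((x : ℤ) ^ (n₂ + 1) + (-1) ^ (n₂ + 1) * x) *
          ((x : ℤ) ^ (n₃ + 1) + (-1) ^ (n₃ + 1) * x) -
        ((x : ℤ) ^ (n₁ + 1) - (-1) ^ (n₁ + 1)) * ((x : ℤ) ^ (n₂ + 1) - (-1) ^ (n₂ + 1)) *
          ((x : ℤ) ^ (n₃ + 1) - (-1) ^ (n₃ + 1)) else 0 := by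
    rintro ⟨a, b⟩
    have e₁ := pathCount_formula x n₁ a b
    have e₂ := pathCount_formula x n₂ a b
    have e₃ := pathCount_formula x n₃ a b
    trans (((x : ℤ) + 1) * (pathCount (Fin (x + 1)) n₁ a b : ℤ)) *
      (((x : ℤ) + 1) * (pathCount (Fin (x + 1)) n₂ a b : ℤ)) *
      (((x : ℤ) + 1) * (pathCount (Fin (x + 1)) n₃ a b : ℤ))
    · ring
    · rw [e₁, e₂, e₃]
      split_ifs <;> ring
  rw [Finset.sum_congr rfl fun p _ => hterm p, Fintype.sum_prod_type]
  simp only [Finset.sum_add_distrib, Finset.sum_ite_eq, Finset.mem_univ, if_true,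
    Finset.sum_const, Finset.card_univ, Fintype.card_fin, nsmul_eq_mul]
  push_cast
  ring
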